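/- arXiv:1702.04623 — 2 statements merged into one kernel-verified Lean document; each statement's English description precedes it below -/
import Mathlib

section
/- For every n ≥ 4, the anti-Gallai simplicial complex Δ_Γ'(W_{n+1}) of the wheel graph W_{n+1} is shellable. -/
/-!
The rim of the wheel is a cycle of length `n ≥ 4`, hence triangle-free, so every triangle of the
wheel consists of the hub together with a rim edge (`antiGallaiIndices_wheelGraph`). These all have
three vertices, so they are exactly the facets (`facets_complexOf_of_card`).

Listing the triangles in the cyclic order of their rim edges is a shelling. A triangle meets each
earlier one inside a spoke which already lies in some earlier triangle: the spoke at its first rim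
vertex, lying in the preceding triangle, or, for the closing triangle `{n, 1, n + 1}`, possibly the
spoke `{1, n + 1}` lying in the first triangle (`exists_spoke`). So every maximal face of the
intersection is a spoke, which has two vertices.
-/

open Finset

/-- The simplicial complex generated by a set `S` of finsets:
its faces are the subsets of members of `S`. -/
def complexOf {V : Type*} (S : Set (Finset V)) : Set (Finset V) :=
  {F | ∃ A ∈ S, F ⊆ A}

/-- The set of line indices of a graph `G`: triples `{i,j,k}` coming from two
distinct incident edges `{i,j}`, `{j,k}` of `G`, together with pairs `{i,j}`
for edges of `G` sharing no vertex with any other edge. -/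
def lineIndices {V : Type*} [DecidableEq V] (G : SimpleGraph V) : Set (Finset V) :=
  {F | (∃ i j k, G.Adj i j ∧ G.Adj j k ∧ i ≠ k ∧ F = {i, j, k}) ∨
       (∃ i j, G.Adj i j ∧ (∀ k, G.Adj i k → k = j) ∧ (∀ k, G.Adj j k → k = i) ∧
          F = {i, j})}

/-- The set of Gallai indices of a graph `G`: triples `{i,j,k}` coming from two
distinct incident edges `{i,j}`, `{j,k}` of `G` not spanning a triangle, together
with pairs `{i,j}` for edges of `G` all of whose incident edges form a triangle
with `{i,j}`. -/
def gallaiIndices {V : Type*} [DecidableEq V] (G : SimpleGraph V) : Set (Finset V) :=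
  {F | (∃ i j k, G.Adj i j ∧ G.Adj j k ∧ i ≠ k ∧ ¬ G.Adj i k ∧ F = {i, j, k}) ∨
       (∃ i j, G.Adj i j ∧ (∀ k, k ≠ j → G.Adj i k → G.Adj j k) ∧
          (∀ k, k ≠ i → G.Adj j k → G.Adj i k) ∧ F = {i, j})}

/-- The set of anti-Gallai indices of a graph `G`: the vertex sets of
triangles of `G`. -/
def antiGallaiIndices {V : Type*} [DecidableEq V] (G : SimpleGraph V) : Set (Finset V) :=
  {F | ∃ i j k, G.Adj i j ∧ G.Adj j k ∧ G.Adj i k ∧ F = {i, j, k}}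

/-- The line simplicial complex of `G`. -/
def lineComplex {V : Type*} [DecidableEq V] (G : SimpleGraph V) : Set (Finset V) :=
  complexOf (lineIndices G)

/-- The Gallai simplicial complex of `G`. -/
def gallaiComplex {V : Type*} [DecidableEq V] (G : SimpleGraph V) : Set (Finset V) :=
  complexOf (gallaiIndices G)

/-- The anti-Gallai simplicial complex of `G`. -/
def antiGallaiComplex {V : Type*} [DecidableEq V] (G : SimpleGraph V) : Set (Finset V) :=
  complexOf (antiGallaiIndices G)

/-- The facets (maximal faces) of a simplicial complex. -/
def facets {V : Type*} (Δ : Set (Finset V)) : Set (Finset V) :=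
  {F | F ∈ Δ ∧ ∀ G ∈ Δ, F ⊆ G → F = G}

/-- A simplicial complex is connected if any two facets are linked by a chain of
facets in which consecutive facets intersect. -/
def ComplexConnected {V : Type*} [DecidableEq V] (Δ : Set (Finset V)) : Prop :=
  ∀ F ∈ facets Δ, ∀ F' ∈ facets Δ, ∃ (q : ℕ) (f : ℕ → Finset V),
    f 0 = F ∧ f q = F' ∧ (∀ i ≤ q, f i ∈ facets Δ) ∧
    ∀ i < q, (f i ∩ f (i + 1)).Nonempty

/-- The Euler characteristic `χ(Δ) = ∑ₖ (-1)ᵏ αₖ`, where `αₖ` is the number of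
faces of `Δ` with exactly `k+1` vertices. -/
noncomputable def eulerChar {V : Type*} (Δ : Set (Finset V)) : ℤ :=
  ∑ᶠ k : ℕ, (-1 : ℤ) ^ k * ({F ∈ Δ | F.card = k + 1}.ncard : ℤ)

/-- A simplicial complex is shellable if its facets can be enumerated
`F_0, …, F_{s-1}` so that for each `0 < i` the subcomplex
`⟨F_0, …, F_{i-1}⟩ ∩ ⟨F_i⟩` is pure of dimension `dim Fᵢ - 1`. -/
def Shellable {V : Type*} (Δ : Set (Finset V)) : Prop :=
  ∃ (s : ℕ) (l : Fin s → Finset V),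
    Function.Injective l ∧
    (∀ i, l i ∈ facets Δ) ∧
    (∀ F ∈ facets Δ, ∃ i, F = l i) ∧
    ∀ i : Fin s, 0 < (i : ℕ) →
      ∀ F ∈ facets {H | H ⊆ l i ∧ ∃ j, j < i ∧ H ⊆ l j}, F.card + 1 = (l i).card

/-- The wheel graph `W_{n+1}` on vertices `1, …, n+1` (hub `n+1`). -/
def wheelGraph (n : ℕ) : SimpleGraph ℕ :=
  SimpleGraph.fromRel (fun a b =>
    (1 ≤ a ∧ a + 1 ≤ n ∧ b = a + 1) ∨ (a = n ∧ b = 1) ∨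
    (1 ≤ a ∧ a ≤ n ∧ b = n + 1))

/-- The friendship graph `F_n` on vertices `1, …, 2n+1` (center `2n+1`). -/
def friendshipGraph (n : ℕ) : SimpleGraph ℕ :=
  SimpleGraph.fromRel (fun a b =>
    (∃ i, 1 ≤ i ∧ i ≤ n ∧ a = 2 * i - 1 ∧ b = 2 * i) ∨
    (1 ≤ a ∧ a ≤ 2 * n ∧ b = 2 * n + 1))

/-- The star graph `S_m` on vertices `1, …, m+1` (center `m+1`). -/
def starGraph (m : ℕ) : SimpleGraph ℕ :=
  SimpleGraph.fromRel (fun a b => 1 ≤ a ∧ a ≤ m ∧ b = m + 1)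

/-- The cycle `C₅` on vertices `1, …, 5`. -/
def cycleFive : SimpleGraph ℕ :=
  SimpleGraph.fromRel (fun a b =>
    (a = 1 ∧ b = 2) ∨ (a = 2 ∧ b = 3) ∨ (a = 3 ∧ b = 4) ∨
    (a = 4 ∧ b = 5) ∨ (a = 5 ∧ b = 1))

/-- The stacked prism graph `Y_{3,n}` on vertices `1, …, 3n`. -/
def prismGraph (n : ℕ) : SimpleGraph ℕ :=
  SimpleGraph.fromRel (fun a b =>
    (∃ k, k < n ∧ ((a = 3 * k + 1 ∧ b = 3 * k + 2) ∨
       (a = 3 * k + 2 ∧ b = 3 * k + 3) ∨ (a = 3 * k + 1 ∧ b = 3 * k + 3))) ∨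
    (∃ k j, k + 2 ≤ n ∧ 1 ≤ j ∧ j ≤ 3 ∧ a = 3 * k + j ∧ b = 3 * (k + 1) + j))

/-- The rim vertex that follows `a` on the cycle `1, …, n`. -/
def rimSucc (n a : ℕ) : ℕ := if a = n then 1 else a + 1

/-- The triangle of the wheel spanned by the hub `n + 1` and the rim edge starting at `a`. -/
def wheelTriangle (n a : ℕ) : Finset ℕ := {a, rimSucc n a, n + 1}

theorem wheelGraph_adj (n : ℕ) (hn : 4 ≤ n) (a b : ℕ) :
    (wheelGraph n).Adj a b ↔
      (1 ≤ a ∧ a ≤ n ∧ b = n + 1) ∨ (1 ≤ b ∧ b ≤ n ∧ a = n + 1) ∨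
      (1 ≤ a ∧ a ≤ n ∧ b = rimSucc n a) ∨ (1 ≤ b ∧ b ≤ n ∧ a = rimSucc n b) := by
  simp only [wheelGraph, SimpleGraph.fromRel_adj, rimSucc]
  split_ifs <;> omega

theorem wheelTriangle_card (n : ℕ) (hn : 4 ≤ n) (a : ℕ) (ha : a ≤ n) :
    (wheelTriangle n a).card = 3 := by
  refine Finset.card_eq_three.2 ⟨a, rimSucc n a, n + 1, ?_, ?_, ?_, rfl⟩ <;>
    grind [rimSucc]

theorem wheelTriangle_of_rim_adj (n : ℕ) (hn : 4 ≤ n) (a b : ℕ)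
    (h : (wheelGraph n).Adj a b) (ha : a ≠ n + 1) (hb : b ≠ n + 1) :
    ∃ c, 1 ≤ c ∧ c ≤ n ∧ ({a, b, n + 1} : Finset ℕ) = wheelTriangle n c := by
  rw [wheelGraph_adj n hn] at h
  rcases h with h | h | ⟨h1, h2, rfl⟩ | ⟨h1, h2, rfl⟩
  · omega
  · omega
  · exact ⟨a, h1, h2, rfl⟩
  · exact ⟨b, h1, h2, Finset.insert_comm _ _ _⟩

/-- The rim cycle has no triangle because its length is at least four. -/
theorem hub_mem_of_triangle (n : ℕ) (hn : 4 ≤ n) (i j k : ℕ) (hij : (wheelGraph n).Adj i j)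
    (hjk : (wheelGraph n).Adj j k) (hik : (wheelGraph n).Adj i k) :
    i = n + 1 ∨ j = n + 1 ∨ k = n + 1 := by
  rw [wheelGraph_adj n hn] at hij hjk hik
  simp only [rimSucc] at hij hjk hik
  by_contra! hne
  split_ifs at hij hjk hik <;> omega

theorem antiGallaiIndices_wheelGraph (n : ℕ) (hn : 4 ≤ n) :
    antiGallaiIndices (wheelGraph n) = {F | ∃ c, 1 ≤ c ∧ c ≤ n ∧ F = wheelTriangle n c} := by
  ext F
  constructor
  · rintro ⟨i, j, k, hij, hjk, hik, rfl⟩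
    rcases hub_mem_of_triangle n hn i j k hij hjk hik with rfl | rfl | rfl
    · obtain ⟨c, h1, h2, h⟩ := wheelTriangle_of_rim_adj n hn j k hjk hij.ne' hik.ne'
      refine ⟨c, h1, h2, h ▸ ?_⟩
      ext x; simp only [Finset.mem_insert, Finset.mem_singleton]; tauto
    · obtain ⟨c, h1, h2, h⟩ := wheelTriangle_of_rim_adj n hn i k hik hij.ne hjk.ne'
      refine ⟨c, h1, h2, h ▸ ?_⟩
      ext x; simp only [Finset.mem_insert, Finset.mem_singleton]; tauto
    · exact wheelTriangle_of_rim_adj n hn i j hij hik.ne hjk.ne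
  · rintro ⟨c, h1, h2, rfl⟩
    refine ⟨c, rimSucc n c, n + 1, ?_, ?_, ?_, rfl⟩ <;> rw [wheelGraph_adj n hn]
    · tauto
    · refine Or.inl ⟨?_, ?_, rfl⟩ <;> unfold rimSucc <;> split_ifs <;> omega
    · tauto

theorem facets_complexOf_of_card {V : Type*} (S : Set (Finset V)) (d : ℕ)
    (hS : ∀ A ∈ S, A.card = d) : facets (complexOf S) = S := by
  ext F
  constructor
  · rintro ⟨⟨A, hA, hFA⟩, hmax⟩
    exact hmax A ⟨A, hA, subset_rfl⟩ hFA ▸ hA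
  · refine fun hF => ⟨⟨F, hF, subset_rfl⟩, ?_⟩
    rintro G ⟨A, hA, hGA⟩ hFG
    have hFA : F = A :=
      Finset.eq_of_subset_of_card_le (hFG.trans hGA) ((hS A hA).trans (hS F hF).symm).le
    exact hFG.antisymm (hFA ▸ hGA)

theorem wheelTriangle_injOn (n : ℕ) (hn : 4 ≤ n) (a b : ℕ) (ha : 1 ≤ a ∧ a ≤ n)
    (hb : 1 ≤ b ∧ b ≤ n) (h : wheelTriangle n a = wheelTriangle n b) : a = b := by
  have h1 : a ∈ wheelTriangle n b := by rw [← h]; simp [wheelTriangle]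
  have h2 : b ∈ wheelTriangle n a := by rw [h]; simp [wheelTriangle]
  simp only [wheelTriangle, Finset.mem_insert, Finset.mem_singleton, rimSucc] at h1 h2
  split_ifs at h1 h2 <;> omega

/-- The shelling step: the intersection of a triangle with an earlier one lies in a two-element
face of the triangle which is itself contained in an earlier triangle. -/
theorem exists_spoke (n : ℕ) (hn : 4 ≤ n) (a b : ℕ) (hb : 1 ≤ b) (hba : b < a) (ha : a ≤ n) :
    ∃ (E : Finset ℕ) (c : ℕ), E.card = 2 ∧ 1 ≤ c ∧ c < a ∧ E ⊆ wheelTriangle n a ∧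
      E ⊆ wheelTriangle n c ∧ wheelTriangle n a ∩ wheelTriangle n b ⊆ E := by
  by_cases h : a = n ∧ b = 1
  · obtain ⟨rfl, rfl⟩ := h
    refine ⟨{1, a + 1}, 1, Finset.card_pair (by omega), le_rfl, hba, ?_, ?_, ?_⟩ <;>
      intro x <;>
      simp only [wheelTriangle, rimSucc, Finset.mem_inter, Finset.mem_insert,
        Finset.mem_singleton] <;>
      split_ifs <;> omega
  · refine ⟨{a, n + 1}, a - 1, Finset.card_pair (by omega), by omega, by omega, ?_, ?_, ?_⟩ <;>
      intro x <;>
      simp only [wheelTriangle, rimSucc, Finset.mem_inter, Finset.mem_insert,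
        Finset.mem_singleton] <;>
      split_ifs <;> omega

/-- For `n ≥ 4`, the anti-Gallai simplicial complex of the wheel graph
`W_{n+1}` is shellable. -/
theorem stmt16 (n : ℕ) (hn : 4 ≤ n) :
    Shellable (antiGallaiComplex (wheelGraph n)) := by
  have hfac : facets (antiGallaiComplex (wheelGraph n)) =
      {F | ∃ c, 1 ≤ c ∧ c ≤ n ∧ F = wheelTriangle n c} := by
    rw [antiGallaiComplex, antiGallaiIndices_wheelGraph n hn]
    refine facets_complexOf_of_card _ 3 ?_
    rintro _ ⟨c, -, h2, rfl⟩
    exact wheelTriangle_card n hn c h2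
  refine ⟨n, fun i => wheelTriangle n (i + 1), ?_, ?_, ?_, ?_⟩
  · intro i j h
    have := wheelTriangle_injOn n hn _ _ (by omega) (by omega) h
    exact Fin.ext (by omega)
  · intro i
    rw [hfac]
    exact ⟨i + 1, by omega, by omega, rfl⟩
  · intro F hF
    rw [hfac] at hF
    obtain ⟨c, h1, h2, rfl⟩ := hF
    refine ⟨⟨c - 1, by omega⟩, ?_⟩
    simp only [Nat.sub_add_cancel h1]
  · rintro i - F ⟨⟨hFi, j, hji, hFj⟩, hmax⟩
    have hji' : (j : ℕ) < i := hji
    obtain ⟨E, c, hE, h1, hc, hEa, hEc, hsub⟩ :=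
      exists_spoke n hn (i + 1) (j + 1) (by omega) (by omega) (by omega)
    -- `E` is a face of the intersection containing `F`, so maximality forces `F = E`.
    have hFE : F = E := by
      refine hmax E ⟨hEa, ⟨c - 1, by omega⟩, Fin.lt_def.2 (by simp only; omega), ?_⟩
        ((Finset.subset_inter hFi hFj).trans hsub)
      simpa only [Nat.sub_add_cancel h1] using hEc
    rw [hFE, hE, wheelTriangle_card n hn _ (by omega)]
end

section
/- The line simplicial complex of the 5-cycle C_5, namely the simplicial complex with facets {1,2,3}, {2,3,4}, {3,4,5}, {4,5,1}, {5,1,2}, is not shellable. -/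
/-!
The line indices of `C₅` are the five cyclic triples `T i = {i+1, i+2, i+3}` (modulo `5`, called
`cyclicTriple` below); they form an antichain, so they are exactly the facets. The complex is a
Möbius strip.

In a shelling, each intersection `F_j ∩ F_i` with `j < i` lies in some `F_k` with `k < i` meeting
`F_i` in `|F_i| - 1` vertices (`shelling_step`). Now `T (i+2) ∩ T i` is a single vertex, and the
only other triple that contains it and meets `T i` in an edge is `T (i+1)`. Hence if `T (i+2)`
precedes `T i`, so does `T (i+1)`, and symmetrically if `T (i-2)` precedes `T i`, so does
`T (i-1)`. Thus the triangles present at each stage form an arc of the cycle. But the fourth one,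
say `T (i+3)` added to `T i, T (i+1), T (i+2)`, comes after `T i = T ((i+3)+2)`, so it would need
`T (i+4)` to be present already: a contradiction.
-/

open Finset

/-- The cyclic triple `{i+1, i+2, i+3}` of vertices of `C₅`, where the labels `1, …, 5` are read
modulo `5` and the index `i` is `0`-based. -/
def cyclicTriple : Fin 5 → Finset ℕ :=
  ![{1, 2, 3}, {2, 3, 4}, {3, 4, 5}, {4, 5, 1}, {5, 1, 2}]

theorem cycleFive_adj (a b : ℕ) : cycleFive.Adj a b ↔
    (a = 1 ∧ b = 2) ∨ (a = 2 ∧ b = 3) ∨ (a = 3 ∧ b = 4) ∨ (a = 4 ∧ b = 5) ∨ (a = 5 ∧ b = 1) ∨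
    (b = 1 ∧ a = 2) ∨ (b = 2 ∧ a = 3) ∨ (b = 3 ∧ a = 4) ∨ (b = 4 ∧ a = 5) ∨ (b = 5 ∧ a = 1) := by
  rw [cycleFive, SimpleGraph.fromRel_adj, and_iff_right_of_imp (by rintro h rfl; omega)]
  simp only [or_assoc]

theorem lineIndices_cycleFive : lineIndices cycleFive = Set.range cyclicTriple := by
  ext F
  simp only [lineIndices, Set.mem_ofPred_eq, cycleFive_adj, Set.mem_range]
  constructor
  · rintro (⟨i, j, k, hij, hjk, hik, rfl⟩ | ⟨i, j, hij, hi, hj, rfl⟩)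
    · rcases hij with ⟨rfl, rfl⟩ | ⟨rfl, rfl⟩ | ⟨rfl, rfl⟩ | ⟨rfl, rfl⟩ | ⟨rfl, rfl⟩ |
          ⟨rfl, rfl⟩ | ⟨rfl, rfl⟩ | ⟨rfl, rfl⟩ | ⟨rfl, rfl⟩ | ⟨rfl, rfl⟩ <;>
        (norm_num at hjk
         rcases hjk with rfl | rfl <;> first | exact absurd rfl hik | decide)
    · exfalso
      -- Every vertex has degree two, so no edge of the cycle is isolated.
      rcases hij with ⟨rfl, rfl⟩ | ⟨rfl, rfl⟩ | ⟨rfl, rfl⟩ | ⟨rfl, rfl⟩ | ⟨rfl, rfl⟩ |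
          ⟨rfl, rfl⟩ | ⟨rfl, rfl⟩ | ⟨rfl, rfl⟩ | ⟨rfl, rfl⟩ | ⟨rfl, rfl⟩ <;>
        simp at hi
  · rintro ⟨i, rfl⟩
    left
    fin_cases i
    · exact ⟨1, 2, 3, by omega, by omega, by omega, rfl⟩
    · exact ⟨2, 3, 4, by omega, by omega, by omega, rfl⟩
    · exact ⟨3, 4, 5, by omega, by omega, by omega, rfl⟩
    · exact ⟨4, 5, 1, by omega, by omega, by omega, rfl⟩
    · exact ⟨5, 1, 2, by omega, by omega, by omega, rfl⟩

theorem facets_complexOf {V : Type*} {S : Set (Finset V)}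
    (hS : ∀ A ∈ S, ∀ B ∈ S, A ⊆ B → A = B) : facets (complexOf S) = S := by
  ext F
  constructor
  · rintro ⟨⟨A, hA, hFA⟩, hmax⟩
    rw [hmax A ⟨A, hA, subset_rfl⟩ hFA]
    exact hA
  · intro hF
    refine ⟨⟨F, hF, subset_rfl⟩, ?_⟩
    rintro G ⟨A, hA, hGA⟩ hFG
    have h := hS F hF A hA (hFG.trans hGA)
    exact hFG.antisymm (h ▸ hGA)

theorem facets_lineComplex_cycleFive :
    facets (lineComplex cycleFive) = Set.range cyclicTriple := by
  rw [lineComplex, lineIndices_cycleFive]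
  apply facets_complexOf
  rintro _ ⟨i, rfl⟩ _ ⟨j, rfl⟩
  revert i j
  decide

/-- If the intersection of `l i` with the complex generated by its predecessors is pure of
codimension one, then each `l j ∩ l i` with `j < i` lies in a predecessor `l k` that meets `l i` in
at least `|l i| - 1` vertices. -/
theorem shelling_step {V : Type*} [DecidableEq V] {s : ℕ} {l : Fin s → Finset V} {i j : Fin s}
    (hji : j < i)
    (h : ∀ F ∈ facets {H | H ⊆ l i ∧ ∃ j, j < i ∧ H ⊆ l j}, F.card + 1 = (l i).card) :
    ∃ k < i, l j ∩ l i ⊆ l k ∧ (l i).card ≤ (l k ∩ l i).card + 1 := by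
  have hfin : {H | H ⊆ l i ∧ ∃ j, j < i ∧ H ⊆ l j}.Finite :=
    (l i).powerset.finite_toSet.subset fun H hH => by simpa using hH.1
  obtain ⟨F, hle, hF⟩ := hfin.exists_le_maximal (a := l j ∩ l i)
    ⟨inter_subset_right, j, hji, inter_subset_left⟩
  have hcard := h F ⟨hF.prop, fun G hG hFG => hFG.antisymm (hF.le_of_ge hG hFG)⟩
  obtain ⟨hFi, k, hki, hFk⟩ := hF.prop
  refine ⟨k, hki, hle.trans hFk, ?_⟩
  have := card_le_card (subset_inter hFk hFi)
  omega

/-- The line simplicial complex of the `5`-cycle `C₅`, namely the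
simplicial complex with facets `{1,2,3}, {2,3,4}, {3,4,5}, {4,5,1}, {5,1,2}`,
is not shellable. -/
theorem stmt17 :
    facets (lineComplex cycleFive) =
      {({1, 2, 3} : Finset ℕ), {2, 3, 4}, {3, 4, 5}, {4, 5, 1}, {5, 1, 2}} ∧
    ¬ Shellable (lineComplex cycleFive) := by
  constructor
  · rw [facets_lineComplex_cycleFive]
    ext F
    simp only [cyclicTriple, Set.mem_range, Fin.exists_fin_succ, Set.mem_insert_iff,
      Set.mem_singleton_iff, eq_comm (a := F)]
    simp
  · rintro ⟨s, l, hl, hmem, hsurj, hshell⟩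
    rw [facets_lineComplex_cycleFive] at hmem hsurj
    -- `t a` is the position of the triple `a` in the shelling.
    choose t ht using fun a => hsurj (cyclicTriple a) ⟨a, rfl⟩
    have key : ∀ a b, t b < t a → ∃ c, t c < t a ∧
        cyclicTriple b ∩ cyclicTriple a ⊆ cyclicTriple c ∧
        (cyclicTriple a).card ≤ (cyclicTriple c ∩ cyclicTriple a).card + 1 := by
      intro a b hab
      obtain ⟨k, hk, h1, h2⟩ :=
        shelling_step hab (hshell (t a) (lt_of_le_of_lt (Nat.zero_le _) hab))
      obtain ⟨c, hc⟩ := hmem k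
      obtain rfl : t c = k := hl (by rw [← ht, hc])
      simp only [← ht] at h1 h2
      exact ⟨c, hk, h1, h2⟩
    have next : ∀ a, t (a + 2) < t a → t (a + 1) < t a := by
      intro a h
      obtain ⟨c, hca, h1, h2⟩ := key a _ h
      have hne : c ≠ a := fun h => hca.ne (h ▸ rfl)
      obtain rfl : c = a + 1 := by
        clear h hca
        revert a c
        decide
      exact hca
    have prev : ∀ a, t (a - 2) < t a → t (a - 1) < t a := by
      intro a h
      obtain ⟨c, hca, h1, h2⟩ := key a _ h
      have hne : c ≠ a := fun h => hca.ne (h ▸ rfl)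
      obtain rfl : c = a - 1 := by
        clear h hca
        revert a c
        decide
      exact hca
    have hinj : ∀ a b, t a = t b → a = b := fun a b hab => by
      have : cyclicTriple a = cyclicTriple b := by rw [ht a, ht b, hab]
      clear hab
      revert a b
      decide
    have hne : ∀ a b, a ≠ b → (t a : ℕ) ≠ t b := fun a b hab h => hab (hinj a b (Fin.ext h))
    have n0 := next 0
    have n1 := next 1
    have n2 := next 2
    have n3 := next 3
    have n4 := next 4
    have p0 := prev 0
    have p1 := prev 1
    have p2 := prev 2
    have p3 := prev 3
    have p4 := prev 4
    simp only [Fin.lt_def, Fin.reduceAdd, Fin.reduceSub] at n0 n1 n2 n3 n4 p0 p1 p2 p3 p4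
    have h01 := hne 0 1 (by decide)
    have h02 := hne 0 2 (by decide)
    have h03 := hne 0 3 (by decide)
    have h04 := hne 0 4 (by decide)
    have h12 := hne 1 2 (by decide)
    have h13 := hne 1 3 (by decide)
    have h14 := hne 1 4 (by decide)
    have h23 := hne 2 3 (by decide)
    have h24 := hne 2 4 (by decide)
    have h34 := hne 3 4 (by decide)
    -- No linear order on the five positions satisfies these ten implications.
    clear * - n0 n1 n2 n3 n4 p0 p1 p2 p3 p4 h01 h02 h03 h04 h12 h13 h14 h23 h24 h34
    omega
end
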